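/- Let η ≥ 1 and d', λ ∈ ℕ. Let G be a finite simple graph, let W ⊆ V(G) be an η-treedepth deletion set of G, and let H ⊆ W be such that every connected component C of G − W satisfies |N_G(C) ∖ H| ≤ d'. Call an η-treedepth deletion set S of G nice if for every T ⊆ W ∖ H the following holds: if the connected components C of G − W with N_G(C) ∖ H = T together contain more than λ vertices of S, then T ⊆ S. Then for every connected η-treedepth deletion set S of G with H ⊆ S, there exists a nice connected η-treedepth deletion set S' of G with S ⊆ S' and |S'| ≤ |S| + d'·(2^η + 1)·|S|/(λ + 1). -/

import Mathlib

open SimpleGraph Set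

variable {V : Type*}

/-- The connected component of `x` inside the induced subgraph `G[S]`, as a subset of `V`. -/
def compIn (G : SimpleGraph V) (S : Set V) (x : V) : Set V :=
  {y | ∃ (hx : x ∈ S) (hy : y ∈ S), (G.induce S).Reachable ⟨x, hx⟩ ⟨y, hy⟩}

/-- `tdLE G n S` means that the treedepth of the induced subgraph `G[S]` is at most `n`,
following the recursive definition of treedepth: a graph has treedepth at most `n+1`
iff from every connected component one can delete a vertex leaving a graph of
treedepth at most `n`; only the empty graph has treedepth at most `0`. -/
def tdLE (G : SimpleGraph V) : ℕ → Set V → Prop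
  | 0, S => S = ∅
  | n+1, S => ∀ x ∈ S, ∃ v ∈ compIn G S x, tdLE G n (compIn G S x \ {v})

/-- The treedepth of the induced subgraph `G[S]`. -/
noncomputable def td (G : SimpleGraph V) (S : Set V) : ℕ :=
  sInf {n | tdLE G n S}

/-- `N_G(C)`: the set of vertices outside `C` having a neighbor in `C`. -/
def nbhd (G : SimpleGraph V) (C : Set V) : Set V :=
  {v | v ∉ C ∧ ∃ u ∈ C, G.Adj u v}

/-- `C` is a connected component of the induced subgraph `G[R]`. -/
def IsCompOf (G : SimpleGraph V) (R C : Set V) : Prop :=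
  ∃ x ∈ R, C = compIn G R x

/-- `S` is an `η`-treedepth deletion set of `G`: `td(G − S) ≤ η`. -/
def IsTDS (G : SimpleGraph V) (η : ℕ) (S : Set V) : Prop :=
  td G Sᶜ ≤ η

/-- `S` is a connected `η`-treedepth deletion set of `G`. -/
def IsCTDS (G : SimpleGraph V) (η : ℕ) (S : Set V) : Prop :=
  IsTDS G η S ∧ S.Nonempty ∧ (G.induce S).Connected

/-- A rooted forest with vertex set `A ⊆ V`, given by its (reflexive) ancestor relation:
`anc u v` means `u` is an ancestor of `v` (every vertex being an ancestor of itself). -/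
structure RootedForest (V : Type*) (A : Set V) where
  anc : V → V → Prop
  mem_left : ∀ {u v}, anc u v → u ∈ A
  mem_right : ∀ {u v}, anc u v → v ∈ A
  refl : ∀ v ∈ A, anc v v
  trans : ∀ {u v w}, anc u v → anc v w → anc u w
  antisymm : ∀ {u v}, anc u v → anc v u → u = v
  chain : ∀ {u w v}, anc u v → anc w v → anc u w ∨ anc w u

/-- Depth of a rooted forest: the maximum number of vertices on a root-to-leaf path,
i.e. the maximum number of ancestors of a vertex. -/
noncomputable def RootedForest.depth [Fintype V] {A : Set V} (F : RootedForest V A) : ℕ :=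
  Finset.univ.sup fun v : V => {u | F.anc u v}.ncard

/-- `F` is a treedepth decomposition of `G[A]`: the endpoints of every edge of `G[A]`
are in ancestor-descendant relation in `F`. -/
def IsTDDecompOn (G : SimpleGraph V) (A : Set V) (F : RootedForest V A) : Prop :=
  ∀ u v, u ∈ A → v ∈ A → G.Adj u v → F.anc u v ∨ F.anc v u

/-- `A` is an `(x,y)`-vertex cut in `G`: `A` avoids `x` and `y` and there is
no path from `x` to `y` in `G − A`. -/
def IsVertexCut (G : SimpleGraph V) (x y : V) (A : Set V) : Prop :=
  ∃ (hx : x ∈ Aᶜ) (hy : y ∈ Aᶜ), ¬ (G.induce Aᶜ).Reachable ⟨x, hx⟩ ⟨y, hy⟩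

/-- The weight of a subgraph: the sum of the weights of its edges. -/
noncomputable def subWeight (w : Sym2 V → ℕ) {G : SimpleGraph V} (T : G.Subgraph) : ℕ :=
  ∑ᶠ e ∈ T.edgeSet, w e

/-- The leaves (vertices with exactly one neighbor) of a subgraph. -/
def subLeaves {G : SimpleGraph V} (T : G.Subgraph) : Set V :=
  {v | (T.neighborSet v).ncard = 1}

/-- `T` is a Steiner tree for the terminal set `R` in `G`. -/
def IsSteinerTree (G : SimpleGraph V) (R : Set V) (T : G.Subgraph) : Prop :=
  T.coe.IsTree ∧ R ⊆ T.verts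

/-- `T` is a `t`-component for `R`: a tree with at most `t` leaves, all of which lie in `R`. -/
def IsTComponent (G : SimpleGraph V) (R : Set V) (t : ℕ) (T : G.Subgraph) : Prop :=
  T.coe.IsTree ∧ (subLeaves T).ncard ≤ t ∧ subLeaves T ⊆ R

/-!
For every type `T` whose components together contain more than `λ` vertices of `S`, pick such a
vertex `s`. Each `t ∈ T` is adjacent to the component of `s`, and a path in that component has fewer
than `2 ^ η` vertices, so `s` is joined to `t` by a path with at most `2 ^ η - 1` vertices besides
`s`. Adding all these paths to `S` keeps it connected. The types partition the components, so there
are at most `|S| / (λ + 1)` such `T`, each of size at most `d'`. New vertices lie in `W` or in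
components whose type is now contained in the set, so one round suffices.
-/

section CompIn

variable {G : SimpleGraph V} {A B : Set V} {x y z : V}

lemma mem_compIn_self (hx : x ∈ A) : x ∈ compIn G A x :=
  ⟨hx, hx, .rfl⟩

lemma compIn_subset : compIn G A x ⊆ A :=
  fun _ ⟨_, hy, _⟩ => hy

lemma mem_compIn_symm (h : y ∈ compIn G A x) : x ∈ compIn G A y :=
  let ⟨hx, hy, hxy⟩ := h
  ⟨hy, hx, hxy.symm⟩

lemma mem_compIn_trans (hxy : y ∈ compIn G A x) (hyz : z ∈ compIn G A y) : z ∈ compIn G A x :=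
  let ⟨hx, _, hxy⟩ := hxy
  let ⟨_, hz, hyz⟩ := hyz
  ⟨hx, hz, hxy.trans hyz⟩

lemma compIn_eq_of_mem (h : y ∈ compIn G A x) : compIn G A y = compIn G A x :=
  Subset.antisymm (fun _ => mem_compIn_trans h) fun _ => mem_compIn_trans (mem_compIn_symm h)

lemma compIn_mono (hAB : A ⊆ B) : compIn G A x ⊆ compIn G B x :=
  fun _ ⟨hx, hy, hxy⟩ => ⟨hAB hx, hAB hy, hxy.map (G.induceHomOfLE hAB).toHom⟩

lemma mem_compIn_of_adj (hx : x ∈ A) (hy : y ∈ A) (h : G.Adj x y) : y ∈ compIn G A x :=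
  ⟨hx, hy, (induce_adj.2 h).reachable⟩

lemma mem_compIn_of_isChain_cons {l : List V} (hl : (x :: l).IsChain G.Adj)
    (hA : ∀ y ∈ x :: l, y ∈ A) : ∀ y ∈ x :: l, y ∈ compIn G A x := by
  induction l generalizing x with
  | nil => simpa using mem_compIn_self (hA x List.mem_cons_self)
  | cons a l ih =>
    obtain ⟨hxa, hl⟩ := List.isChain_cons_cons.1 hl
    have hA' : ∀ y ∈ a :: l, y ∈ A := fun y hy => hA y (List.mem_cons_of_mem x hy)
    have hx : x ∈ A := hA x List.mem_cons_self
    rintro y (_ | ⟨_, hy⟩)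
    · exact mem_compIn_self hx
    · exact mem_compIn_trans (mem_compIn_of_adj hx (hA' a List.mem_cons_self) hxa) (ih hl hA' y hy)

lemma exists_isPath_of_mem_compIn (h : y ∈ compIn G A x) :
    ∃ p : G.Walk x y, p.IsPath ∧ ∀ z ∈ p.support, z ∈ A := by
  obtain ⟨hx, hy, hxy⟩ := h
  obtain ⟨p, hp⟩ := hxy.exists_isPath
  refine ⟨p.map (Embedding.induce A).toHom, hp.map Subtype.val_injective, fun z hz => ?_⟩
  obtain ⟨z, -, rfl⟩ := List.mem_map.1 (Walk.support_map _ p ▸ hz)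
  exact z.2

end CompIn

section Treedepth

variable {G : SimpleGraph V} {A B : Set V} {n : ℕ}

lemma tdLE.mono (hA : tdLE G n A) (hBA : B ⊆ A) : tdLE G n B := by
  induction n generalizing A B with
  | zero => exact subset_eq_empty hBA hA
  | succ n ih =>
    intro x hx
    obtain ⟨v, -, hv⟩ := hA x (hBA hx)
    by_cases hvB : v ∈ compIn G B x
    · exact ⟨v, hvB, ih hv (sdiff_subset_sdiff_left (compIn_mono hBA))⟩
    · exact ⟨x, mem_compIn_self hx,
        ih hv fun z hz => ⟨compIn_mono hBA hz.1, fun hzv => hvB (hzv ▸ hz.1)⟩⟩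

lemma tdLE.succ (hA : tdLE G n A) : tdLE G (n + 1) A := by
  induction n generalizing A with
  | zero => exact fun x hx => absurd hx (hA ▸ notMem_empty x)
  | succ n ih => exact fun x hx => (hA x hx).imp fun _ hv => ⟨hv.1, ih hv.2⟩

lemma tdLE_of_encard_le (hA : A.encard ≤ n) : tdLE G n A := by
  induction n generalizing A with
  | zero => exact encard_eq_zero.1 (nonpos_iff_eq_zero.1 hA)
  | succ n ih =>
    intro x hx
    refine ⟨x, mem_compIn_self hx, ih ?_⟩
    have hcard : (A \ {x}).encard + 1 ≤ n + 1 := by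
      simpa only [encard_sdiff_singleton_add_one hx, Nat.cast_succ] using hA
    exact (encard_le_encard (sdiff_subset_sdiff_left compIn_subset)).trans
      ((ENat.add_le_add_iff_right ENat.one_ne_top).1 hcard)

lemma td_le_iff_tdLE (hA : A.Finite) : td G A ≤ n ↔ tdLE G n A := by
  refine ⟨fun h => ?_, fun h => Nat.sInf_le h⟩
  have htd : tdLE G (td G A) A := Nat.sInf_mem (s := {n | tdLE G n A})
    ⟨A.ncard, tdLE_of_encard_le hA.cast_ncard_eq.ge⟩
  exact monotone_nat_of_le_succ (f := (tdLE G · A)) (fun _ => tdLE.succ) h htd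

lemma isTDS_iff_tdLE [Finite V] {S : Set V} : IsTDS G n S ↔ tdLE G n Sᶜ :=
  td_le_iff_tdLE (toFinite _)

lemma IsTDS.superset [Finite V] {S S' : Set V} (hS : IsTDS G n S) (hSS' : S ⊆ S') :
    IsTDS G n S' :=
  isTDS_iff_tdLE.2 ((isTDS_iff_tdLE.1 hS).mono (compl_subset_compl.2 hSS'))

/- The vertex deleted from the component containing the path splits the path into two paths in a
graph of smaller treedepth. -/
lemma tdLE.length_lt_two_pow {l : List V} (hA : tdLE G n A) (hl : l.IsChain G.Adj)
    (hnodup : l.Nodup) (hlA : ∀ x ∈ l, x ∈ A) : l.length < 2 ^ n := by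
  induction n generalizing A l with
  | zero =>
    have hnil : l = [] := List.eq_nil_iff_forall_not_mem.2 fun x hx => (hA ▸ hlA x hx : x ∈ ∅)
    simp [hnil]
  | succ n ih =>
    obtain _ | ⟨x, l'⟩ := l
    · simp
    obtain ⟨v, -, hv⟩ := hA x (hlA x List.mem_cons_self)
    have hcomp := mem_compIn_of_isChain_cons hl hlA
    generalize x :: l' = l at hl hnodup hcomp ⊢
    have hshort {l' : List V} (hsub : l'.Sublist l) (hl' : l'.IsChain G.Adj) (hvl' : v ∉ l') :
        l'.length < 2 ^ n :=
      ih hv hl' (hnodup.sublist hsub) fun z hz =>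
        ⟨hcomp z (hsub.subset hz), fun hzv => hvl' (hzv ▸ hz)⟩
    by_cases hvl : v ∈ l
    · obtain ⟨l₁, l₂, rfl⟩ := List.append_of_mem hvl
      have hvl₁₂ : v ∉ l₁ ++ l₂ := (List.nodup_cons.1 (List.nodup_middle.1 hnodup)).1
      rw [List.mem_append, not_or] at hvl₁₂
      have hl₁ : l₁.length < 2 ^ n := hshort (by simp) hl.left_of_append hvl₁₂.1
      have hl₂ : l₂.length < 2 ^ n := hshort (by simp) hl.right_of_append.tail hvl₁₂.2
      simp only [List.length_append, List.length_cons, pow_succ]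
      lia
    · exact (hshort (.refl l) hl hvl).trans_le (Nat.pow_le_pow_right two_pos n.le_succ)

end Treedepth

section BiUnion

variable {α ι : Type*} {I : Set ι} {A S : Set α} {B : ι → Set α}

lemma encard_union_biUnion_sdiff_le {k : ℕ∞} (hI : I.Finite)
    (hB : ∀ i ∈ I, (B i \ A).encard ≤ k) :
    ((A ∪ ⋃ i ∈ I, B i) \ A).encard ≤ I.encard * k :=
  calc ((A ∪ ⋃ i ∈ I, B i) \ A).encard = (⋃ i ∈ I, B i \ A).encard := by
        simp only [union_sdiff_left, iUnion_sdiff]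
    _ ≤ ∑ i ∈ hI.toFinset, (B i \ A).encard :=
      (hI.encard_biUnion_le _).trans_eq (finsum_mem_eq_finite_toFinset_sum _ hI)
    _ ≤ hI.toFinset.card • k :=
      Finset.sum_le_card_nsmul _ _ _ fun i hi => hB i (hI.mem_toFinset.1 hi)
    _ = I.encard * k := by rw [nsmul_eq_mul, hI.encard_eq_coe_toFinset_card]

lemma ncard_mul_le_of_pairwiseDisjoint {k : ℕ} (hS : S.Finite) (hdisj : I.PairwiseDisjoint B)
    (hBS : ∀ i ∈ I, B i ⊆ S) (hk : ∀ i ∈ I, k ≤ (B i).ncard) : I.ncard * k ≤ S.ncard := by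
  obtain hI | hI := I.finite_or_infinite
  · calc I.ncard * k = ∑ _i ∈ hI.toFinset, k := by
          rw [Finset.sum_const, smul_eq_mul, ncard_eq_toFinset_card I hI]
      _ ≤ ∑ i ∈ hI.toFinset, (B i).ncard :=
        Finset.sum_le_sum fun i hi => hk i (hI.mem_toFinset.1 hi)
      _ = (⋃ i ∈ I, B i).ncard := by
        rw [hI.ncard_biUnion (fun i hi => hS.subset (hBS i hi)) hdisj,
          finsum_mem_eq_finite_toFinset_sum _ hI]
      _ ≤ S.ncard := ncard_le_ncard (iUnion₂_subset hBS) hS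
  · simp [hI.ncard]

lemma connected_induce_union_biUnion {G : SimpleGraph α} (hA : (G.induce A).Connected)
    (hB : ∀ i ∈ I, (G.induce (B i)).Connected) (hAB : ∀ i ∈ I, (A ∩ B i).Nonempty) :
    (G.induce (A ∪ ⋃ i ∈ I, B i)).Connected := by
  obtain ⟨a, ha⟩ := hA.nonempty
  refine G.induce_connected_of_patches a (.inl ha) fun {z} hz => ?_
  obtain hz | hz := hz
  · exact ⟨A, subset_union_left, ha, hz, hA.preconnected _ _⟩
  · obtain ⟨i, hi, hz⟩ := mem_iUnion₂.1 hz
    exact ⟨A ∪ B i, union_subset_union_right A (subset_biUnion_of_mem hi), .inl ha, .inr hz,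
      induce_union_connected hA.preconnected (hB i hi).preconnected (hAB i hi) _ _⟩

end BiUnion

/-- The union of the components `C` of `G - W` of *type* `T`, that is, with `N_G(C) \ H = T`. -/
def typeClass (G : SimpleGraph V) (W H T : Set V) : Set V :=
  ⋃₀ {C | IsCompOf G Wᶜ C ∧ nbhd G C \ H = T}

/-- The *heavy* types: those whose components together contain more than `lam` vertices of `S`.
They are the types whose vertices a nice set has to contain. -/
def heavyTypes (G : SimpleGraph V) (W H : Set V) (lam : ℕ) (S : Set V) : Set (Set V) :=
  {T | lam < (S ∩ typeClass G W H T).ncard}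

/-- The paper's *nice* sets: every heavy type is contained in `S`. Being a deletion set is not
part of the definition. -/
def IsNice (G : SimpleGraph V) (W H : Set V) (lam : ℕ) (S : Set V) : Prop :=
  ∀ T ⊆ W \ H, T ∈ heavyTypes G W H lam S → T ⊆ S

section Types

variable {G : SimpleGraph V} {W H S T : Set V} {s t z : V} {η lam : ℕ}

lemma mem_typeClass_iff :
    z ∈ typeClass G W H T ↔ z ∉ W ∧ nbhd G (compIn G Wᶜ z) \ H = T := by
  constructor
  · rintro ⟨_, ⟨⟨x, -, rfl⟩, hT⟩, hz⟩
    exact ⟨compIn_subset hz, (compIn_eq_of_mem hz).symm ▸ hT⟩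
  · rintro ⟨hz, hT⟩
    exact ⟨_, ⟨⟨z, hz, rfl⟩, hT⟩, mem_compIn_self hz⟩

lemma pairwise_disjoint_typeClass : Pairwise (Function.onFun Disjoint (typeClass G W H)) :=
  fun _ _ hne => disjoint_left.2 fun _ hz hz' =>
    hne ((mem_typeClass_iff.1 hz).2.symm.trans (mem_typeClass_iff.1 hz').2)

lemma compIn_subset_typeClass (hs : s ∈ typeClass G W H T) :
    compIn G Wᶜ s ⊆ typeClass G W H T :=
  fun _ hz => mem_typeClass_iff.2
    ⟨compIn_subset hz, compIn_eq_of_mem hz ▸ (mem_typeClass_iff.1 hs).2⟩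

lemma exists_mem_compIn_adj (hs : s ∈ typeClass G W H T) (ht : t ∈ T) :
    ∃ u ∈ compIn G Wᶜ s, G.Adj u t := by
  rw [← (mem_typeClass_iff.1 hs).2] at ht
  exact ht.1.2

lemma subset_of_mem_typeClass (hs : s ∈ typeClass G W H T) : T ⊆ W := by
  intro t ht
  obtain ⟨u, hu, hut⟩ := exists_mem_compIn_adj hs ht
  rw [← (mem_typeClass_iff.1 hs).2] at ht
  by_contra htW
  exact ht.1.1 (mem_compIn_trans hu (mem_compIn_of_adj (compIn_subset hu) htW hut))

lemma exists_connected_of_mem_typeClass (hW : tdLE G η Wᶜ) (hs : s ∈ typeClass G W H T)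
    (ht : t ∈ T) :
    ∃ P : Set V, s ∈ P ∧ t ∈ P ∧ P ⊆ T ∪ typeClass G W H T ∧ (G.induce P).Connected ∧
      (P \ {s}).encard ≤ (2 ^ η - 1 : ℕ) := by
  classical
  obtain ⟨u, hu, hut⟩ := exists_mem_compIn_adj hs ht
  obtain ⟨p, hp, hpW⟩ := exists_isPath_of_mem_compIn hu
  have hlen : p.support.length < 2 ^ η :=
    hW.length_lt_two_pow p.isChain_adj_support hp.support_nodup hpW
  have hpT : ∀ z ∈ p.support, z ∈ typeClass G W H T := by
    rw [← p.cons_tail_support] at hpW ⊢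
    exact fun z hz => compIn_subset_typeClass hs (mem_compIn_of_isChain_cons
      (p.cons_tail_support ▸ p.isChain_adj_support) hpW z hz)
  let q : G.Walk s t := p.concat hut
  refine ⟨{z | z ∈ q.support}, q.start_mem_support, q.end_mem_support, fun z hz => ?_,
    q.connected_induce_support, ?_⟩
  · obtain hz | rfl : z ∈ p.support ∨ z = t := by simpa [q] using hz
    exacts [.inr (hpT z hz), .inl ht]
  · have hsub : {z | z ∈ q.support} \ {s} ⊆ (q.support.tail.toFinset : Set V) := by
      rintro z ⟨hz, hzs⟩
      simpa using (q.mem_support_iff.1 hz).resolve_left hzs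
    have hcard : q.support.tail.toFinset.card ≤ 2 ^ η - 1 :=
      calc q.support.tail.toFinset.card ≤ q.support.tail.length := List.toFinset_card_le _
        _ = p.support.length := by simp [q]
        _ ≤ 2 ^ η - 1 := Nat.le_sub_one_of_lt hlen
    exact (encard_le_encard hsub).trans
      ((encard_coe_eq_coe_finsetCard _).trans_le (Nat.cast_le.2 hcard))

lemma exists_connected_superset_of_mem_typeClass (hW : tdLE G η Wᶜ)
    (hs : s ∈ typeClass G W H T) (hT : T.Finite) :
    ∃ Q : Set V, s ∈ Q ∧ T ⊆ Q ∧ Q ⊆ T ∪ typeClass G W H T ∧ (G.induce Q).Connected ∧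
      (Q \ {s}).encard ≤ T.encard * (2 ^ η - 1 : ℕ) := by
  choose! P hsP htP hPT hP hcard using
    fun t (ht : t ∈ T) => exists_connected_of_mem_typeClass hW hs ht
  refine ⟨{s} ∪ ⋃ t ∈ T, P t, .inl rfl, fun t ht => .inr (mem_biUnion ht (htP t ht)), ?_, ?_, ?_⟩
  · exact union_subset (singleton_subset_iff.2 (.inr hs)) (iUnion₂_subset hPT)
  · exact connected_induce_union_biUnion (.of_subsingleton) hP fun t ht => ⟨s, rfl, hsP t ht⟩
  · exact encard_union_biUnion_sdiff_le hT hcard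

lemma nonempty_of_mem_heavyTypes (hT : T ∈ heavyTypes G W H lam S) :
    (S ∩ typeClass G W H T).Nonempty :=
  nonempty_of_ncard_ne_zero (Nat.ne_zero_of_lt hT)

lemma finite_heavyTypes (hS : S.Finite) : (heavyTypes G W H lam S).Finite := by
  refine (hS.image fun z => nbhd G (compIn G Wᶜ z) \ H).subset fun T hT => ?_
  obtain ⟨z, hzS, hz⟩ := nonempty_of_mem_heavyTypes hT
  exact ⟨z, hzS, (mem_typeClass_iff.1 hz).2⟩

lemma ncard_heavyTypes_mul_le (hS : S.Finite) :
    (heavyTypes G W H lam S).ncard * (lam + 1) ≤ S.ncard :=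
  ncard_mul_le_of_pairwiseDisjoint hS
    (fun _ _ _ _ hne =>
      (pairwise_disjoint_typeClass hne).mono inter_subset_right inter_subset_right)
    (fun _ _ => inter_subset_left) fun _ hT => hT

/- The added vertices lie in `W` or in components of an already heavy type, so no further type
becomes heavy. -/
lemma isNice_union_biUnion_heavyTypes {Q : Set V → Set V}
    (hTQ : ∀ T ∈ heavyTypes G W H lam S, T ⊆ Q T)
    (hQT : ∀ T ∈ heavyTypes G W H lam S, Q T ⊆ T ∪ typeClass G W H T) :
    IsNice G W H lam (S ∪ ⋃ T ∈ heavyTypes G W H lam S, Q T) := by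
  intro T _ hT
  suffices hheavy : T ∈ heavyTypes G W H lam S from
    (hTQ T hheavy).trans ((subset_biUnion_of_mem hheavy).trans subset_union_right)
  by_contra hlight
  refine hlight (hT.trans_eq (congrArg ncard
    (Subset.antisymm ?_ (inter_subset_inter_left _ subset_union_left))))
  rintro z ⟨hz | hz, hzT⟩
  · exact ⟨hz, hzT⟩
  · obtain ⟨T', hT', hz⟩ := mem_iUnion₂.1 hz
    obtain hzT' | hzT' := hQT T' hT' hz
    · obtain ⟨s, -, hs⟩ := nonempty_of_mem_heavyTypes hT'
      exact absurd (subset_of_mem_typeClass hs hzT') (mem_typeClass_iff.1 hzT).1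
    · have hTT' : T = T' := by_contra fun hne =>
        disjoint_left.1 (pairwise_disjoint_typeClass hne) hzT hzT'
      exact absurd (hTT' ▸ hT') hlight

lemma encard_le_of_mem_heavyTypes {d : ℕ∞}
    (hnb : ∀ C, IsCompOf G Wᶜ C → (nbhd G C \ H).encard ≤ d)
    (hT : T ∈ heavyTypes G W H lam S) : T.encard ≤ d := by
  obtain ⟨-, -, C, ⟨hC, rfl⟩, -⟩ := nonempty_of_mem_heavyTypes hT
  exact hnb C hC

lemma exists_isNice_connected_superset {d : ℕ} (hW : tdLE G η Wᶜ)
    (hnb : ∀ C, IsCompOf G Wᶜ C → (nbhd G C \ H).encard ≤ d) (hS : S.Finite)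
    (hSconn : (G.induce S).Connected) :
    ∃ S' : Set V, S ⊆ S' ∧ IsNice G W H lam S' ∧ (G.induce S').Connected ∧
      (S' \ S).encard ≤ (heavyTypes G W H lam S).encard * (d * (2 ^ η - 1) : ℕ) := by
  have : Nonempty V := hSconn.nonempty.map Subtype.val
  let 𝒯 := heavyTypes G W H lam S
  have hTd : ∀ T ∈ 𝒯, T.encard ≤ d := fun T hT => encard_le_of_mem_heavyTypes hnb hT
  choose! s hsS hs using fun T (hT : T ∈ 𝒯) => nonempty_of_mem_heavyTypes hT
  choose! Q hsQ hTQ hQT hQ hcard using fun T (hT : T ∈ 𝒯) =>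
    exists_connected_superset_of_mem_typeClass hW (hs T hT) (finite_of_encard_le_coe (hTd T hT))
  have hQS : ∀ T ∈ 𝒯, (Q T \ S).encard ≤ (d * (2 ^ η - 1) : ℕ) := fun T hT =>
    calc (Q T \ S).encard ≤ (Q T \ {s T}).encard :=
          encard_le_encard (sdiff_subset_sdiff_right (singleton_subset_iff.2 (hsS T hT)))
      _ ≤ T.encard * (2 ^ η - 1 : ℕ) := hcard T hT
      _ ≤ (d * (2 ^ η - 1) : ℕ) := Nat.cast_mul (α := ℕ∞) _ _ ▸ mul_le_mul_left (hTd T hT) _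
  exact ⟨S ∪ ⋃ T ∈ 𝒯, Q T, subset_union_left, isNice_union_biUnion_heavyTypes hTQ hQT,
    connected_induce_union_biUnion hSconn hQ fun T hT => ⟨s T, hsS T hT, hsQ T hT⟩,
    encard_union_biUnion_sdiff_le (finite_heavyTypes hS) hQS⟩

end Types

lemma cast_le_add_mul_div {a b c h m : ℕ} (ha : a ≤ b + h * c) (hb : h * (m + 1) ≤ b) :
    (a : ℝ) ≤ b + c * b / (m + 1) := by
  have ha' : (a : ℝ) ≤ b + h * c := mod_cast ha
  have hb' : (h : ℝ) ≤ b / (m + 1) := (le_div_iff₀ (by positivity)).2 (mod_cast hb)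
  calc (a : ℝ) ≤ b + c * h := by linarith
    _ ≤ b + c * (b / (m + 1)) := by gcongr
    _ = b + c * b / (m + 1) := by rw [mul_div_assoc]

/- On infinite graphs `td` is `0` when no `tdLE` holds, hence `tdLE` in place of `IsTDS`; likewise
`ncard` is `0` on infinite sets, hence `encard` in the bound on neighborhoods. -/
theorem stmt9_general (η d' lam : ℕ) (G : SimpleGraph V) (W : Set V) (hW : tdLE G η Wᶜ)
    (H : Set V) (hnb : ∀ C, IsCompOf G Wᶜ C → (nbhd G C \ H).encard ≤ d')
    (S : Set V) (hS : S.Finite) (hSconn : (G.induce S).Connected) :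
    ∃ S' : Set V, S'.Finite ∧ IsNice G W H lam S' ∧ (G.induce S').Connected ∧ S ⊆ S' ∧
      (S'.ncard : ℝ) ≤ S.ncard + d' * (2 ^ η - 1) * S.ncard / (lam + 1) := by
  obtain ⟨S', hSS', hnice, hconn, hcard⟩ :=
    exists_isNice_connected_superset (lam := lam) hW hnb hS hSconn
  set 𝒯 := heavyTypes G W H lam S
  have h𝒯 : 𝒯.Finite := finite_heavyTypes hS
  have hbound : S'.encard ≤ (S.ncard + 𝒯.ncard * (d' * (2 ^ η - 1)) : ℕ) :=
    calc S'.encard = S.encard + (S' \ S).encard := by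
          rw [add_comm, encard_sdiff_add_encard_of_subset hSS']
      _ ≤ S.encard + 𝒯.encard * (d' * (2 ^ η - 1) : ℕ) := by gcongr
      _ = (S.ncard + 𝒯.ncard * (d' * (2 ^ η - 1)) : ℕ) := by
        rw [← hS.cast_ncard_eq, ← h𝒯.cast_ncard_eq]
        norm_cast
  obtain ⟨hfin, hle⟩ := encard_le_coe_iff_finite_ncard_le.1 hbound
  refine ⟨S', hfin, hnice, hconn, hSS', ?_⟩
  simpa using cast_le_add_mul_div hle (ncard_heavyTypes_mul_le hS)

/-- let `W` be an `η`-treedepth deletion set, `H ⊆ W`, and suppose every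
connected component `C` of `G − W` satisfies `|N_G(C) ∖ H| ≤ d'`. Then every connected
`η`-treedepth deletion set `S ⊇ H` can be enlarged to a *nice* connected `η`-treedepth
deletion set `S'` (nice: whenever the components `C` of `G − W` with `N_G(C) ∖ H = T`
together contain more than `λ` vertices of `S'`, we have `T ⊆ S'`) with
`|S'| ≤ |S| + d'·(2^η + 1)·|S|/(λ + 1)`. -/
theorem stmt9 {V : Type*} [Fintype V] (η d' lam : ℕ) (hη : 1 ≤ η)
    (G : SimpleGraph V) (W : Set V) (hW : IsTDS G η W)
    (H : Set V) (hHW : H ⊆ W)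
    (hnb : ∀ C, IsCompOf G Wᶜ C → (nbhd G C \ H).ncard ≤ d')
    (S : Set V) (hS : IsCTDS G η S) (hHS : H ⊆ S) :
    ∃ S' : Set V,
      (∀ T ⊆ W \ H,
        lam < (S' ∩ ⋃₀ {C | IsCompOf G Wᶜ C ∧ nbhd G C \ H = T}).ncard → T ⊆ S') ∧
      IsCTDS G η S' ∧ S ⊆ S' ∧
      (S'.ncard : ℝ) ≤ (S.ncard : ℝ) +
        (d' : ℝ) * ((2 : ℝ) ^ η + 1) * (S.ncard : ℝ) / ((lam : ℝ) + 1) := by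
  obtain ⟨S', -, hnice, hconn, hSS', hcard⟩ := stmt9_general η d' lam G W (isTDS_iff_tdLE.1 hW) H
    (fun C hC => encard_le_coe_iff_finite_ncard_le.2 ⟨toFinite _, hnb C hC⟩) S S.toFinite hS.2.2
  exact ⟨S', hnice, ⟨hS.1.superset hSS', hS.2.1.mono hSS', hconn⟩, hSS',
    hcard.trans (by gcongr; linarith)⟩
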